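/- Let n ≥ 1 and let G be a compact subgroup of GL(n, ℝ). Let Π be the group of affine transformations of ℝⁿ of the form x ↦ g x + v with g ∈ G and v ∈ ℝⁿ. Suppose K₀ is a convex body in ℝⁿ and x₀ ∈ ℝⁿ is any point (not necessarily in K₀) such that A x₀ = x₀ for every A ∈ Π with A(K₀) = K₀. Then there exists a Π-invariant point p : Wₙ → ℝⁿ (i.e., p is continuous in the Hausdorff metric and satisfies p(A(K)) = A(p(K)) for every convex body K and every A ∈ Π) such that p(K₀) = x₀. -/

import Mathlib

/-!
The point `p` is obtained by averaging over the compact group `G` (normalized Haar measure) a map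
`q : Wₙ → ℝⁿ` which is continuous, commutes with translations, and satisfies `q (g K₀) = g x₀` for
`g ∈ G`: the map `p K = ∫ g, g (q (g⁻¹ K))` is then continuous, commutes with `G` and with
translations, and sends `K₀` to `x₀`.

To build `q`, let `c K` be the point whose `i`-th coordinate is the maximum of the `i`-th coordinate
over `K`; it is continuous and commutes with translations (`continuous_corner`, `corner_act_one`).
The hypothesis on the symmetries of `K₀` says precisely that the rule
`g K₀ - c (g K₀) ↦ g x₀ - c (g K₀)` is a well-defined function on the compact set of the bodies
`g K₀ - c (g K₀)`, `g ∈ G`. It is continuous because a continuous surjection from a compact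
space to a Hausdorff space is a quotient map, so by Tietze's theorem it extends to a continuous
`f : Wₙ → ℝⁿ` (`exists_tietze_factor`). The map `q K = c K + f (K - c K)` is as required.
-/

open Set TopologicalSpace

noncomputable section

/-- `ℝⁿ` as a Euclidean space. -/
abbrev Euc (n : ℕ) := EuclideanSpace ℝ (Fin n)

/-- The space `Wₙ` of convex bodies in `ℝⁿ`: compact convex sets with nonempty interior,
topologized (as a subtype of the nonempty compact sets) by the Hausdorff metric. -/
abbrev ConvBody (n : ℕ) :=
  {K : NonemptyCompacts (Euc n) //
    Convex ℝ (K : Set (Euc n)) ∧ (interior (K : Set (Euc n))).Nonempty}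

/-- The image of a convex body `K` under the affine transformation `x ↦ g x + v`. -/
def act {n : ℕ} (g : (Euc n →L[ℝ] Euc n)ˣ) (v : Euc n) (K : ConvBody n) : ConvBody n :=
  ⟨K.1.map (fun x => (g : Euc n →L[ℝ] Euc n) x + v) (by fun_prop), by
    have himg : ((K.1.map (fun x => (g : Euc n →L[ℝ] Euc n) x + v) (by fun_prop) :
        NonemptyCompacts (Euc n)) : Set (Euc n)) =
        (fun x => x + v) '' ((g : Euc n →L[ℝ] Euc n) '' (K.1 : Set (Euc n))) := by
      rw [Set.image_image]; rfl
    rw [himg]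
    refine ⟨?_, ?_⟩
    · have := (K.2.1.linear_image (g : Euc n →L[ℝ] Euc n).toLinearMap).translate v
      simpa [add_comm] using this
    · have ho : IsOpenMap (fun x => (g : Euc n →L[ℝ] Euc n) x) :=
        (ContinuousLinearEquiv.unitsEquiv ℝ (Euc n) g).toHomeomorph.isOpenMap
      exact ((K.2.2.image _).image _).mono
        ((Set.image_mono (ho.image_interior_subset _)).trans
          ((isOpenMap_add_right v).image_interior_subset _))⟩

theorem coe_act {n : ℕ} (g : (Euc n →L[ℝ] Euc n)ˣ) (v : Euc n) (K : ConvBody n) :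
    ((act g v K).1 : Set (Euc n)) =
      (fun x => (g : Euc n →L[ℝ] Euc n) x + v) '' (K.1 : Set (Euc n)) := rfl

theorem act_act {n : ℕ} (g h : (Euc n →L[ℝ] Euc n)ˣ) (v w : Euc n) (K : ConvBody n) :
    act g v (act h w K) = act (g * h) ((g : Euc n →L[ℝ] Euc n) w + v) K := by
  apply Subtype.ext
  apply SetLike.coe_injective
  rw [coe_act, coe_act, coe_act, Set.image_image]
  congr 1
  ext1 x
  simp [add_assoc]

theorem continuous_act {n : ℕ} {X : Type*} [TopologicalSpace X]
    {g : X → (Euc n →L[ℝ] Euc n)ˣ} {v : X → Euc n} {K : X → ConvBody n}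
    (hg : Continuous g) (hv : Continuous v) (hK : Continuous K) :
    Continuous fun x => act (g x) (v x) (K x) := by
  refine Continuous.subtype_mk ?_ _
  have hg' : Continuous fun x => (g x : Euc n →L[ℝ] Euc n) := Units.continuous_val.comp hg
  refine Continuous.nonemptyCompacts_map' (f := fun x => (K x).1)
    (g := fun x y => (g x : Euc n →L[ℝ] Euc n) y + v x) (by fun_prop) ?_
  exact ((hg'.comp continuous_fst).clm_apply continuous_snd).add (hv.comp continuous_fst)

/-- The maximum of the `i`-th coordinate over `K`. -/
def coordMax {n : ℕ} (i : Fin n) (K : ConvBody n) : ℝ :=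
  sSup ((fun x : Euc n => x i) '' (K.1 : Set (Euc n)))

theorem isLUB_coordMax {n : ℕ} (i : Fin n) (K : ConvBody n) :
    IsLUB ((fun x : Euc n => x i) '' (K.1 : Set (Euc n))) (coordMax i K) :=
  isLUB_csSup (K.1.nonempty.image _)
    (K.1.isCompact.image (by fun_prop : Continuous fun x : Euc n => x i)).bddAbove

theorem continuous_coordMax {n : ℕ} (i : Fin n) :
    Continuous (coordMax i : ConvBody n → ℝ) := by
  refine (LipschitzWith.of_le_add (f := coordMax i) fun K L => ?_).continuous
  refine (isLUB_coordMax i K).2 ?_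
  rintro _ ⟨x, hx, rfl⟩
  obtain ⟨y, hy, hxy⟩ := L.1.isCompact.exists_infDist_eq_dist L.1.nonempty x
  have h1 : Metric.infDist x (L.1 : Set (Euc n)) ≤ dist K L :=
    Metric.infDist_le_hausdorffDist_of_mem hx
      (Metric.hausdorffEDist_ne_top_of_nonempty_of_bounded K.1.nonempty L.1.nonempty
        K.1.isCompact.isBounded L.1.isCompact.isBounded)
  have h2 : y i ≤ coordMax i L := (isLUB_coordMax i L).1 ⟨y, hy, rfl⟩
  have h3 : x i - y i ≤ dist x y := by
    rw [dist_eq_norm]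
    exact (le_abs_self _).trans (PiLp.norm_apply_le (x - y) i)
  dsimp only
  linarith

/-- The maximal corner of the smallest coordinate box containing `K`. -/
def corner {n : ℕ} (K : ConvBody n) : Euc n := WithLp.toLp 2 fun i => coordMax i K

theorem continuous_corner {n : ℕ} : Continuous (corner : ConvBody n → Euc n) :=
  (PiLp.continuous_toLp 2 _).comp (continuous_pi continuous_coordMax)

theorem corner_act_one {n : ℕ} (v : Euc n) (K : ConvBody n) :
    corner (act 1 v K) = corner K + v := by
  ext i
  change coordMax i (act 1 v K) = coordMax i K + v i
  refine (isLUB_coordMax i _).unique ?_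
  have h := (OrderIso.addRight (v i)).isLUB_image'.2 (isLUB_coordMax i K)
  rw [coe_act, Set.image_image]
  rw [Set.image_image] at h
  exact h

/-- If `f` is constant on the fibres of a continuous map `ψ` from a compact space into a metric
space, then `f` factors through a continuous map defined on the whole target: it descends to the
compact range of `ψ`, and Tietze's theorem extends it from there. -/
theorem exists_tietze_factor {n : ℕ} {X Y : Type} [TopologicalSpace X] [CompactSpace X]
    [MetricSpace Y] {ψ : X → Y} {φ : X → Euc n} (hψ : Continuous ψ) (hφ : Continuous φ)
    (h : ∀ a b, ψ a = ψ b → φ a = φ b) :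
    ∃ f : Y → Euc n, Continuous f ∧ ∀ a, f (ψ a) = φ a := by
  let Ψ : C(X, Set.range ψ) := ⟨Set.rangeFactorization ψ, hψ.subtype_mk _⟩
  have hquot : Topology.IsQuotientMap Ψ :=
    Ψ.continuous.isClosedMap.isQuotientMap Ψ.continuous Set.rangeFactorization_surjective
  have hfac : Function.FactorsThrough (⟨φ, hφ⟩ : C(X, Euc n)) Ψ := fun a b hab =>
    h a b (congrArg Subtype.val hab)
  let F : C(Set.range ψ, Euc n) := hquot.lift ⟨φ, hφ⟩ hfac
  have : TietzeExtension (Euc n) := TietzeExtension.of_tvs ℝ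
  obtain ⟨f, hf⟩ := F.exists_restrict_eq (isCompact_range hψ).isClosed
  refine ⟨f, f.continuous, fun a => ?_⟩
  have h1 : f (ψ a) = F (Ψ a) :=
    DFunLike.congr_fun hf (Ψ a)
  rw [h1]
  exact DFunLike.congr_fun (hquot.lift_comp ⟨φ, hφ⟩ hfac) a

/-- A continuous, translation-equivariant map with the prescribed values `g x₀` on the
bodies `g K₀`, `g ∈ G`. -/
theorem exists_translation_equivariant {n : ℕ}
    (G : Subgroup ((Euc n →L[ℝ] Euc n)ˣ))
    (hG : IsCompact (G : Set ((Euc n →L[ℝ] Euc n)ˣ)))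
    (K₀ : ConvBody n) (x₀ : Euc n)
    (hfix : ∀ g ∈ G, ∀ v : Euc n,
      (fun x => (g : Euc n →L[ℝ] Euc n) x + v) '' (K₀.1 : Set (Euc n)) = (K₀.1 : Set (Euc n)) →
      (g : Euc n →L[ℝ] Euc n) x₀ + v = x₀) :
    ∃ q : ConvBody n → Euc n, Continuous q ∧ (∀ v K, q (act 1 v K) = q K + v) ∧
      ∀ g ∈ G, q (act g 0 K₀) = (g : Euc n →L[ℝ] Euc n) x₀ := by
  have : CompactSpace G := isCompact_iff_compactSpace.1 hG
  have hval : Continuous fun g : G => ((g : (Euc n →L[ℝ] Euc n)ˣ) : Euc n →L[ℝ] Euc n) :=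
    Units.continuous_val.comp continuous_subtype_val
  have hc : Continuous fun g : G => corner (act (g : (Euc n →L[ℝ] Euc n)ˣ) 0 K₀) :=
    continuous_corner.comp (continuous_act continuous_subtype_val continuous_const continuous_const)
  obtain ⟨f, hf, hfψ⟩ := exists_tietze_factor
    (ψ := fun g : G => act (g : (Euc n →L[ℝ] Euc n)ˣ) (-corner (act (g : _) 0 K₀)) K₀)
    (φ := fun g : G => ((g : (Euc n →L[ℝ] Euc n)ˣ) : Euc n →L[ℝ] Euc n) x₀
      + -corner (act (g : _) 0 K₀))
    (continuous_act continuous_subtype_val hc.neg continuous_const)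
    ((hval.clm_apply continuous_const).add hc.neg)
    (by
      intro g h hgh
      generalize -corner (act (g : (Euc n →L[ℝ] Euc n)ˣ) 0 K₀) = a at hgh ⊢
      generalize -corner (act (h : (Euc n →L[ℝ] Euc n)ˣ) 0 K₀) = b at hgh ⊢
      obtain ⟨g, hg⟩ := g
      obtain ⟨h, hh⟩ := h
      dsimp only at hgh ⊢
      have hinv : ∀ x, (h : Euc n →L[ℝ] Euc n) (((h⁻¹ : (Euc n →L[ℝ] Euc n)ˣ) : Euc n →L[ℝ] Euc n) x) = x := fun x => by
        rw [← mul_apply_eq_comp, ← Units.val_mul]; simp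
      -- Applying the inverse of `x ↦ h x + b` yields a symmetry of `K₀`.
      have key := congrArg (act h⁻¹ (-((h⁻¹ : (Euc n →L[ℝ] Euc n)ˣ) : Euc n →L[ℝ] Euc n) b)) hgh
      rw [act_act, act_act] at key
      have key2 := congrArg (fun K : ConvBody n => (K.1 : Set (Euc n))) key
      simp only [coe_act, inv_mul_cancel, add_neg_cancel, add_zero, Units.val_one,
        one_apply_eq_self, Set.image_id'] at key2
      have h1 := hfix _ (G.mul_mem (G.inv_mem hh) hg) _ key2
      have h2 := congrArg (h : Euc n →L[ℝ] Euc n) h1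
      simp only [Units.val_mul, mul_apply_eq_comp, map_add, map_neg, hinv] at h2
      rw [← h2]; abel)
  refine ⟨fun K => corner K + f (act 1 (-corner K) K),
    continuous_corner.add (hf.comp (continuous_act continuous_const continuous_corner.neg
      continuous_id)), fun v K => ?_, fun g hg => ?_⟩
  · simp only [corner_act_one, act_act, mul_one, Units.val_one, one_apply_eq_self]
    rw [show v + -(corner K + v) = -corner K by abel]
    abel
  · have := hfψ ⟨g, hg⟩
    simp only [act_act, one_mul, map_zero, zero_add]
    rw [this]
    abel

theorem stmt1 (n : ℕ) (hn : 1 ≤ n)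
    (G : Subgroup ((Euc n →L[ℝ] Euc n)ˣ))
    (hG : IsCompact (G : Set ((Euc n →L[ℝ] Euc n)ˣ)))
    (K₀ : ConvBody n) (x₀ : Euc n)
    -- `x₀` is fixed by every `A ∈ Π` (i.e. `A : x ↦ g x + v`, `g ∈ G`, `v ∈ ℝⁿ`) with `A(K₀) = K₀`
    (hfix : ∀ g ∈ G, ∀ v : Euc n,
      (fun x => (g : Euc n →L[ℝ] Euc n) x + v) '' (K₀.1 : Set (Euc n)) = (K₀.1 : Set (Euc n)) →
      (g : Euc n →L[ℝ] Euc n) x₀ + v = x₀) :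
    ∃ p : ConvBody n → Euc n,
      Continuous p ∧
      (∀ K L : ConvBody n, ∀ g ∈ G, ∀ v : Euc n,
        (L.1 : Set (Euc n)) =
            (fun x => (g : Euc n →L[ℝ] Euc n) x + v) '' (K.1 : Set (Euc n)) →
        p L = (g : Euc n →L[ℝ] Euc n) (p K) + v) ∧
      p K₀ = x₀ := by
  obtain ⟨q, hq, hqt, hq₀⟩ := exists_translation_equivariant G hG K₀ x₀ hfix
  have : CompactSpace G := isCompact_iff_compactSpace.1 hG
  let : MeasurableSpace G := borel G
  have : BorelSpace G := ⟨rfl⟩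
  let μ : MeasureTheory.Measure G :=
    MeasureTheory.Measure.haarMeasure (⊤ : PositiveCompacts G)
  have : MeasureTheory.IsProbabilityMeasure μ :=
    ⟨by simpa using MeasureTheory.Measure.haarMeasure_self (K₀ := (⊤ : PositiveCompacts G))⟩
  have hval : Continuous fun g : G => ((g : (Euc n →L[ℝ] Euc n)ˣ) : Euc n →L[ℝ] Euc n) :=
    Units.continuous_val.comp continuous_subtype_val
  let F : ConvBody n → G → Euc n := fun K g =>
    ((g : (Euc n →L[ℝ] Euc n)ˣ) : Euc n →L[ℝ] Euc n)
      (q (act ((g⁻¹ : G) : (Euc n →L[ℝ] Euc n)ˣ) 0 K))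
  have hF : Continuous (Function.uncurry F) := by
    refine (hval.comp continuous_snd).clm_apply (hq.comp (continuous_act ?_ continuous_const
      continuous_fst))
    exact continuous_subtype_val.comp (continuous_inv.comp continuous_snd)
  have hFK : ∀ K, Continuous (F K) := fun K => hF.comp (Continuous.prodMk_right K)
  have hintg : ∀ f : G → Euc n, Continuous f → MeasureTheory.Integrable f μ := fun f hf =>
    hf.integrable_of_hasCompactSupport (HasCompactSupport.of_compactSpace f)
  have hinv : ∀ (g : G) (x : Euc n), ((g : (Euc n →L[ℝ] Euc n)ˣ) : Euc n →L[ℝ] Euc n)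
      ((((g⁻¹ : G) : (Euc n →L[ℝ] Euc n)ˣ) : Euc n →L[ℝ] Euc n) x) = x := fun g x => by
    rw [← mul_apply_eq_comp, ← Units.val_mul]; simp
  refine ⟨fun K => ∫ g, F K g ∂μ, ?_, ?_, ?_⟩
  · -- `G` is compact, so `K ↦ F K` is continuous for the sup norm, for which the
    -- integral is continuous.
    have h1 : Continuous fun K => (⟨F K, hFK K⟩ : C(G, Euc n)) :=
      ContinuousMap.continuous_of_continuous_uncurry _ hF
    have h2 : Continuous fun f : C(G, Euc n) => ∫ g, f g ∂μ := by
      refine (LipschitzWith.of_dist_le_mul (K := 1) fun f f' => ?_).continuous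
      rw [dist_eq_norm, ← MeasureTheory.integral_sub (hintg _ f.continuous) (hintg _ f'.continuous)]
      refine (MeasureTheory.norm_integral_le_of_norm_le_const (C := dist f f')
        (Filter.Eventually.of_forall fun g => ?_)).trans ?_
      · rw [← dist_eq_norm]
        exact ContinuousMap.dist_apply_le_dist g
      · simp
    exact h2.comp h1
  · intro K L h hh v hL
    obtain rfl : L = act h v K := Subtype.ext (SetLike.coe_injective hL)
    have hstep : ∀ g : G, F (act h v K) g =
        (h : Euc n →L[ℝ] Euc n) (F K ((⟨h, hh⟩ : G)⁻¹ * g)) + v := by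
      intro g
      have hact : act ((g⁻¹ : G) : (Euc n →L[ℝ] Euc n)ˣ) 0 (act h v K) =
          act 1 ((((g⁻¹ : G) : (Euc n →L[ℝ] Euc n)ˣ) : Euc n →L[ℝ] Euc n) v)
            (act ((((⟨h, hh⟩ : G)⁻¹ * g)⁻¹ : G) : (Euc n →L[ℝ] Euc n)ˣ) 0 K) := by
        simp [act_act]
      simp only [F]
      rw [hact, hqt, map_add, hinv, ← mul_apply_eq_comp, ← Units.val_mul]
      simp
    simp only [hstep]
    have hi : MeasureTheory.Integrable (fun g => F K ((⟨h, hh⟩ : G)⁻¹ * g)) μ :=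
      hintg _ ((hFK K).comp (continuous_const.mul continuous_id))
    rw [MeasureTheory.integral_add ((h : Euc n →L[ℝ] Euc n).integrable_comp hi)
      (MeasureTheory.integrable_const v), ContinuousLinearMap.integral_comp_comm _ hi,
      MeasureTheory.integral_mul_left_eq_self (F K)]
    simp
  · have : ∀ g, F K₀ g = x₀ := fun g => by
      simp only [F]
      rw [hq₀ _ (g⁻¹).2, hinv]
    simp [this]
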